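/- arXiv:1009.2642 — 3 statements merged into one kernel-verified Lean document; each statement's English description precedes it below -/
import Mathlib

section
/- Let k ≥ 5 with k ≢ 0 (mod 3) and k ≢ 0 (mod 4), let l be an integer with 1 ≤ l ≤ (k−1)/2, and set n := gcd(l, k). Then M_{l,k} has exactly n connected components, each with k/n vertices, and every 2-element subset of the form {i, i+l} contained in some member of M_{l,k} is contained in exactly two members of M_{l,k}, while every 2-element subset of the form {i, i+2l} is contained in exactly one member of M_{l,k} (so M_{l,k} is a bounded surface); its connected components are pairwise combinatorially isomorphic. -/
/-- The difference cycle `(a : b : c)` (with `c = n - a - b`) on `ℤ/nℤ`: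
the collection of subsets of the form `{i, i + a, i + a + b}` for `i ∈ ℤ/nℤ`. -/
def dc (n a b : ℕ) : Set (Finset (ZMod n)) :=
  {s | ∃ i : ZMod n, s = {i, i + (a : ZMod n), i + (a : ZMod n) + (b : ZMod n)}}

/-- `M_{l,k}`: the difference cycle `(l : l : k−2l)` on `ℤ/kℤ`. -/
def Mlk (k l : ℕ) : Set (Finset (ZMod k)) := dc k l l

/-- The graph on `ℤ/nℤ` whose edges are the 2-element subsets contained in some
member of `S`. -/
def cGraph (n : ℕ) (S : Set (Finset (ZMod n))) : SimpleGraph (ZMod n) :=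
  SimpleGraph.fromRel (fun v w => ∃ s ∈ S, v ∈ s ∧ w ∈ s)

/-! A member of `(a : b : c)` based at `i` lies in the coset of `i` modulo the subgroup `H`
generated by `a` and `b`, and steps by `a` and by `b` stay inside members. So the connected
components are the cosets of `H`, which translations permute. For `a = b = l`, the subgroup `H` has
order `k / gcd(l, k)`, and listing the base points `j` of the members that contain a given edge
reduces both edge counts to `3l ≠ 0` and `4l ≠ 0` in `ℤ/kℤ`. -/

section Triangle

variable {G : Type*} [AddCommGroup G] [DecidableEq G]

/-- The triangle with base point `i` in the difference cycle with first two differences `a` and `b`,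
over an arbitrary abelian group `G`. For `G = ℤ/nℤ` these are the members of `dc n a b`. -/
def triangle (a b i : G) : Finset G := {i, i + a, i + a + b}

theorem mem_triangle {a b i v : G} : v ∈ triangle a b i ↔ v = i ∨ v = i + a ∨ v = i + a + b := by
  simp only [triangle, Finset.mem_insert, Finset.mem_singleton]

theorem image_add_right_triangle (a b i t : G) :
    (triangle a b i).image (· + t) = triangle a b (i + t) := by
  simp only [triangle, Finset.image_insert, Finset.image_singleton, add_right_comm _ _ t]

variable {l : G}

theorem pair_add_subset_triangle_iff (h3 : 3 • l ≠ 0) (i j : G) :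
    {i, i + l} ⊆ triangle l l j ↔ j = i ∨ j = i - l := by
  simp only [Finset.insert_subset_iff, Finset.singleton_subset_iff, mem_triangle]
  constructor
  · rintro ⟨rfl | rfl | rfl, hmem⟩
    · exact .inl rfl
    · exact .inr (add_sub_cancel_right j l).symm
    · -- Here `j + 3l` is in the triangle at `j`, which forces `2l = 0`, so again `j = i`.
      grind
  · rintro (rfl | rfl) <;> simp

theorem pair_add_two_nsmul_subset_triangle_iff (h3 : 3 • l ≠ 0) (h4 : 4 • l ≠ 0) (i j : G) :
    {i, i + 2 • l} ⊆ triangle l l j ↔ j = i := by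
  simp only [Finset.insert_subset_iff, Finset.singleton_subset_iff, mem_triangle]
  constructor
  · rintro ⟨rfl | rfl | rfl, hmem⟩
    · rfl
    · -- `j + 3l` is in the triangle at `j` only if `l`, `2l` or `3l` vanishes.
      grind
    · -- `j + 4l` is in the triangle at `j` only if `2l`, `3l` or `4l` vanishes.
      grind
  · rintro rfl
    simp [two_nsmul, add_assoc]

theorem triangle_injective (h2 : 2 • l ≠ 0) (h3 : 3 • l ≠ 0) :
    Function.Injective (triangle l l) := by
  have base_point {i j : G} (h : triangle l l i = triangle l l j) : j = i ∨ j = i - l :=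
    (pair_add_subset_triangle_iff h3 i j).1 <|
      h ▸ (pair_add_subset_triangle_iff h3 i i).2 (.inl rfl)
  intro i j h
  rcases base_point h with hj | hj
  · exact hj.symm
  rcases base_point h.symm with hi | hi
  · exact hi
  have two_nsmul_eq : 2 • l = 0 := by grind
  exact absurd two_nsmul_eq h2

theorem ncard_triangles_containing (h2 : 2 • l ≠ 0) (h3 : 3 • l ≠ 0) (e : Finset G) :
    {s ∈ Set.range (triangle l l) | e ⊆ s}.ncard = {j | e ⊆ triangle l l j}.ncard := by
  rw [← Set.ncard_image_of_injective _ (triangle_injective h2 h3)]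
  exact congrArg Set.ncard Set.image_preimage_eq_range_inter.symm

theorem ncard_triangles_containing_pair_add (h2 : 2 • l ≠ 0) (h3 : 3 • l ≠ 0) (i : G) :
    {s ∈ Set.range (triangle l l) | {i, i + l} ⊆ s}.ncard = 2 := by
  simp only [ncard_triangles_containing h2 h3, pair_add_subset_triangle_iff h3]
  exact Set.ncard_pair (by grind)

theorem ncard_triangles_containing_pair_add_two_nsmul (h3 : 3 • l ≠ 0) (h4 : 4 • l ≠ 0) (i : G) :
    {s ∈ Set.range (triangle l l) | {i, i + 2 • l} ⊆ s}.ncard = 1 := by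
  have h2 : 2 • l ≠ 0 := by grind
  simp only [ncard_triangles_containing h2 h3, pair_add_two_nsmul_subset_triangle_iff h3 h4]
  exact Set.ncard_singleton i

end Triangle

section DifferenceCycle

variable {n a b : ℕ}

theorem dc_eq_range_triangle (n a b : ℕ) :
    dc n a b = Set.range (triangle (a : ZMod n) (b : ZMod n)) :=
  Set.ext fun _ => exists_congr fun _ => eq_comm

theorem image_add_right_mem_dc {s : Finset (ZMod n)} (hs : s ∈ dc n a b) (t : ZMod n) :
    s.image (· + t) ∈ dc n a b := by
  rw [dc_eq_range_triangle] at hs ⊢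
  obtain ⟨i, rfl⟩ := hs
  exact ⟨i + t, (image_add_right_triangle _ _ i t).symm⟩

theorem image_add_right_mem_dc_iff {s : Finset (ZMod n)} (t : ZMod n) :
    s.image (· + t) ∈ dc n a b ↔ s ∈ dc n a b := by
  refine ⟨fun h => ?_, fun h => image_add_right_mem_dc h t⟩
  simpa only [Finset.image_image, Function.comp_def, add_neg_cancel_right, Finset.image_id']
    using image_add_right_mem_dc h (-t)

theorem cGraph_adj {S : Set (Finset (ZMod n))} {v w : ZMod n} :
    (cGraph n S).Adj v w ↔ v ≠ w ∧ ∃ s ∈ S, v ∈ s ∧ w ∈ s := by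
  simp only [cGraph, SimpleGraph.fromRel_adj, and_comm (a := w ∈ _), or_self]

theorem reachable_cGraph_of_mem {S : Set (Finset (ZMod n))} {s : Finset (ZMod n)} {v w : ZMod n}
    (hs : s ∈ S) (hv : v ∈ s) (hw : w ∈ s) : (cGraph n S).Reachable v w := by
  rcases eq_or_ne v w with rfl | hne
  · rfl
  · exact (cGraph_adj.2 ⟨hne, s, hs, hv, hw⟩).reachable

/-- The subgroup of `ℤ/nℤ` generated by the differences of `(a : b : c)`; its cosets turn out to be
the connected components. The third difference `c` is `-(a + b)` modulo `n`, hence not listed. -/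
def differenceSubgroup (n a b : ℕ) : AddSubgroup (ZMod n) :=
  AddSubgroup.closure {(a : ZMod n), (b : ZMod n)}

theorem neg_add_mem_differenceSubgroup {s : Finset (ZMod n)} (hs : s ∈ dc n a b) {v w : ZMod n}
    (hv : v ∈ s) (hw : w ∈ s) : -v + w ∈ differenceSubgroup n a b := by
  rw [dc_eq_range_triangle] at hs
  obtain ⟨i, rfl⟩ := hs
  have ha : (a : ZMod n) ∈ differenceSubgroup n a b := AddSubgroup.subset_closure (by simp)
  have hb : (b : ZMod n) ∈ differenceSubgroup n a b := AddSubgroup.subset_closure (by simp)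
  have sub_base_mem {x : ZMod n} (hx : x ∈ triangle (a : ZMod n) b i) :
      x - i ∈ differenceSubgroup n a b := by
    rcases mem_triangle.1 hx with rfl | rfl | rfl
    · simp
    · simpa using ha
    · simpa [add_assoc] using add_mem ha hb
  simpa [neg_add_eq_sub] using sub_mem (sub_base_mem hw) (sub_base_mem hv)

theorem reachable_add_of_mem_differenceSubgroup {h : ZMod n} (hh : h ∈ differenceSubgroup n a b) :
    ∀ v, (cGraph n (dc n a b)).Reachable v (v + h) := by
  induction hh using AddSubgroup.closure_induction with
  | mem d hd =>
    intro v
    rcases hd with rfl | rfl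
    · exact reachable_cGraph_of_mem ⟨v, rfl⟩ (by simp) (by simp)
    · exact reachable_cGraph_of_mem ⟨v - a, rfl⟩ (by simp) (by simp)
  | zero => simp
  | add d e _ _ hd he => exact fun v => add_assoc v d e ▸ (hd v).trans (he (v + d))
  | neg d _ hd => exact fun v => by simpa using (hd (v + -d)).symm

theorem reachable_cGraph_dc_iff {v w : ZMod n} :
    (cGraph n (dc n a b)).Reachable v w ↔ -v + w ∈ differenceSubgroup n a b := by
  constructor
  · rintro ⟨p⟩
    induction p with
    | nil => simp
    | cons hadj _ ih =>
      obtain ⟨-, s, hs, hu, hv⟩ := cGraph_adj.1 hadj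
      simpa [add_assoc] using add_mem (neg_add_mem_differenceSubgroup hs hu hv) ih
  · intro h
    simpa using reachable_add_of_mem_differenceSubgroup h v

theorem card_connectedComponent_cGraph_dc (n a b : ℕ) :
    Nat.card (cGraph n (dc n a b)).ConnectedComponent = (differenceSubgroup n a b).index :=
  Nat.card_congr <| Quot.congrRight fun _ _ =>
    reachable_cGraph_dc_iff.trans QuotientAddGroup.leftRel_apply.symm

theorem card_vertices_connectedComponent_cGraph_dc (c : (cGraph n (dc n a b)).ConnectedComponent) :
    Nat.card {v // (cGraph n (dc n a b)).connectedComponentMk v = c} =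
      Nat.card (differenceSubgroup n a b) := by
  induction c using SimpleGraph.ConnectedComponent.ind with | _ u =>
  refine Nat.card_congr ((Equiv.addLeft (-u)).subtypeEquiv fun v => ?_)
  rw [eq_comm, SimpleGraph.ConnectedComponent.eq]
  exact reachable_cGraph_dc_iff

theorem exists_equiv_dc_map_connectedComponent (c c' : (cGraph n (dc n a b)).ConnectedComponent) :
    ∃ φ : ZMod n ≃ ZMod n,
      (∀ s : Finset (ZMod n), s ∈ dc n a b ↔ s.image φ ∈ dc n a b) ∧
      ∀ v, (cGraph n (dc n a b)).connectedComponentMk v = c →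
        (cGraph n (dc n a b)).connectedComponentMk (φ v) = c' := by
  induction c using SimpleGraph.ConnectedComponent.ind with | _ u =>
  induction c' using SimpleGraph.ConnectedComponent.ind with | _ w =>
  refine ⟨Equiv.addRight (w - u), fun _ => (image_add_right_mem_dc_iff _).symm, fun v hv => ?_⟩
  rw [SimpleGraph.ConnectedComponent.eq, reachable_cGraph_dc_iff] at hv ⊢
  rwa [Equiv.coe_addRight, show -(v + (w - u)) + w = -v + u by abel]

end DifferenceCycle

section EqualDifferences

variable {k : ℕ} [NeZero k]

theorem card_differenceSubgroup_self (l : ℕ) :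
    Nat.card (differenceSubgroup k l l) = k / l.gcd k := by
  rw [differenceSubgroup, Set.pair_eq_singleton, ← AddSubgroup.zmultiples_eq_closure,
    Nat.card_zmultiples, ZMod.addOrderOf_coe _ (NeZero.ne k), Nat.gcd_comm]

theorem index_differenceSubgroup_self (l : ℕ) : (differenceSubgroup k l l).index = l.gcd k := by
  have hcard : k / l.gcd k * (differenceSubgroup k l l).index = k := by
    simpa only [card_differenceSubgroup_self, Nat.card_zmod] using
      (differenceSubgroup k l l).card_mul_index
  have hdvd : l.gcd k ∣ k := Nat.gcd_dvd_right l k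
  have hpos : 0 < k / l.gcd k := Nat.div_gcd_pos_of_pos_right l (NeZero.pos k)
  exact Nat.eq_of_mul_eq_mul_left hpos (hcard.trans (Nat.div_mul_cancel hdvd).symm)

theorem stmt_16_general {l : ℕ} (h3 : ¬ k ∣ 3 * l) (h4 : ¬ k ∣ 4 * l) :
    Nat.card (cGraph k (Mlk k l)).ConnectedComponent = l.gcd k ∧
    (∀ c : (cGraph k (Mlk k l)).ConnectedComponent,
      Nat.card {v : ZMod k // (cGraph k (Mlk k l)).connectedComponentMk v = c} = k / l.gcd k) ∧
    (∀ i : ZMod k,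
      {s ∈ Mlk k l | ({i, i + (l : ZMod k)} : Finset (ZMod k)) ⊆ s}.ncard = 2) ∧
    (∀ i : ZMod k,
      {s ∈ Mlk k l | ({i, i + ((2 * l : ℕ) : ZMod k)} : Finset (ZMod k)) ⊆ s}.ncard = 1) ∧
    (∀ c c' : (cGraph k (Mlk k l)).ConnectedComponent,
      ∃ φ : ZMod k ≃ ZMod k,
        (∀ s : Finset (ZMod k), s ∈ Mlk k l ↔ s.image φ ∈ Mlk k l) ∧
        (∀ v : ZMod k, (cGraph k (Mlk k l)).connectedComponentMk v = c →
          (cGraph k (Mlk k l)).connectedComponentMk (φ v) = c')) := by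
  have three_nsmul_ne : 3 • (l : ZMod k) ≠ 0 := by
    rwa [nsmul_eq_mul, ← Nat.cast_mul, Ne, ZMod.natCast_eq_zero_iff]
  have four_nsmul_ne : 4 • (l : ZMod k) ≠ 0 := by
    rwa [nsmul_eq_mul, ← Nat.cast_mul, Ne, ZMod.natCast_eq_zero_iff]
  have two_nsmul_ne : 2 • (l : ZMod k) ≠ 0 := by grind
  refine ⟨?_, fun c => ?_, fun i => ?_, fun i => ?_, exists_equiv_dc_map_connectedComponent⟩
  · exact (card_connectedComponent_cGraph_dc k l l).trans (index_differenceSubgroup_self l)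
  · exact (card_vertices_connectedComponent_cGraph_dc c).trans (card_differenceSubgroup_self l)
  · rw [Mlk, dc_eq_range_triangle]
    exact ncard_triangles_containing_pair_add two_nsmul_ne three_nsmul_ne i
  · rw [Mlk, dc_eq_range_triangle, Nat.cast_mul, ← nsmul_eq_mul]
    exact ncard_triangles_containing_pair_add_two_nsmul three_nsmul_ne four_nsmul_ne i

end EqualDifferences

/-- For `k ≥ 5` with `3 ∤ k`, `4 ∤ k` and `1 ≤ l ≤ (k−1)/2`, `n = gcd(l, k)`:
`M_{l,k}` has `n` connected components with `k/n` vertices each; each edge `{i, i+l}`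
contained in some member lies in exactly two members and each edge `{i, i+2l}`
contained in some member lies in exactly one member (so `M_{l,k}` is a bounded
surface); and the connected components are pairwise combinatorially isomorphic. -/
theorem stmt_16 (k l n : ℕ) (hk : 5 ≤ k) (h3 : ¬ 3 ∣ k) (h4 : ¬ 4 ∣ k)
    (hl : 1 ≤ l) (hl2 : 2 * l ≤ k - 1) (hn : n = Nat.gcd l k) :
    Nat.card (cGraph k (Mlk k l)).ConnectedComponent = n ∧
    (∀ c : (cGraph k (Mlk k l)).ConnectedComponent,
      Nat.card {v : ZMod k // (cGraph k (Mlk k l)).connectedComponentMk v = c} = k / n) ∧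
    (∀ i : ZMod k, (∃ s ∈ Mlk k l, ({i, i + (l : ZMod k)} : Finset (ZMod k)) ⊆ s) →
      {s ∈ Mlk k l | ({i, i + (l : ZMod k)} : Finset (ZMod k)) ⊆ s}.ncard = 2) ∧
    (∀ i : ZMod k, (∃ s ∈ Mlk k l, ({i, i + ((2 * l : ℕ) : ZMod k)} : Finset (ZMod k)) ⊆ s) →
      {s ∈ Mlk k l | ({i, i + ((2 * l : ℕ) : ZMod k)} : Finset (ZMod k)) ⊆ s}.ncard = 1) ∧
    (∀ c c' : (cGraph k (Mlk k l)).ConnectedComponent,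
      ∃ φ : ZMod k ≃ ZMod k,
        (∀ s : Finset (ZMod k), s ∈ Mlk k l ↔ s.image φ ∈ Mlk k l) ∧
        (∀ v : ZMod k, (cGraph k (Mlk k l)).connectedComponentMk v = c →
          (cGraph k (Mlk k l)).connectedComponentMk (φ v) = c')) := by
  have : NeZero k := ⟨by lia⟩
  obtain ⟨hcount, hcard, hinner, hboundary, hiso⟩ := stmt_16_general (k := k) (l := l)
    (fun h => h3 ⟨l, (Nat.eq_of_dvd_of_lt_two_mul (by lia) h (by lia)).symm⟩)
    (fun h => h4 ⟨l, (Nat.eq_of_dvd_of_lt_two_mul (by lia) h (by lia)).symm⟩)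
  exact hn ▸ ⟨hcount, hcard, fun i _ => hinner i, fun i _ => hboundary i, hiso⟩
end

section
/- Let k > 1 with k ≡ 1 or 5 (mod 6). Then the collection of all 3-element subsets of ℤ/kℤ is the disjoint union of the (k−1)/2 complexes M_{l,k}, taken over 1 ≤ l ≤ (k−1)/2, and the complexes S_{l,j,k}, taken over all integer pairs (l, j) with 1 ≤ l < j < k − l − j; moreover the number of such pairs (l, j) equals (k² − 6k + 5)/12, each M_{l,k} has gcd(l, k) connected components on k/gcd(l, k) vertices each, and each S_{l,j,k} has gcd(l, j, k) connected components on k/gcd(l, j, k) vertices each. -/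
/-- `S_{l,j,k}`: the union of the difference cycles `(l : j : k−l−j)` and
`(l : k−l−j : j)` on `ℤ/kℤ`. -/
def Sljk (k l j : ℕ) : Set (Finset (ZMod k)) := dc k l j ∪ dc k l (k - l - j)

/-- Parameter range for the Möbius strips: `1 ≤ l ≤ (k−1)/2`. -/
def mRange (k l : ℕ) : Prop := 1 ≤ l ∧ 2 * l ≤ k - 1

/-- Parameter range for the tori: `1 ≤ l < j < k − l − j`. -/
def tRange (k : ℕ) (p : ℕ × ℕ) : Prop := 1 ≤ p.1 ∧ p.1 < p.2 ∧ p.1 + 2 * p.2 < k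

/-!
Rotating or reflecting a triangle of `ℤ/kℤ` permutes its three cyclic gaps, and every permutation
of the gaps arises in this way, so the dihedral orbits of triangles correspond to the partitions of
`k` into three positive parts. The orbits with a repeated part `l` are the `M_{l,k}`; the orbits
with distinct parts, of which `l < j` are the two smallest, are the `S_{l,j,k}`. Subtracting one
from each of three distinct parts gives a recursion from `k + 3` to `k` for their number.

The edge graph of an orbit with gaps `a`, `b` is the Cayley graph of `ℤ/kℤ` with jumps `a`, `b`,
`a + b`, so its components are the cosets of the subgroup generated by `gcd a b`.
-/

/-- The union of the difference cycles `(a : b : c)` and `(b : a : c)` on `ℤ/nℤ`, that is, the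
orbit of `{0, a, a + b}` under the dihedral group of all maps `x ↦ ± x + i`. -/
def dihedralCycle (n a b : ℕ) : Set (Finset (ZMod n)) := dc n a b ∪ dc n b a

/-- `s` is a triangle in the cyclically ordered set `ℤ/kℤ` whose successive gaps, read once around
the cycle from a suitable vertex, are the positive integers `a`, `b`, `c`. -/
structure HasGaps {k : ℕ} (s : Finset (ZMod k)) (a b c : ℕ) : Prop where
  pos_left : 0 < a
  pos_mid : 0 < b
  pos_right : 0 < c
  sum_eq : a + b + c = k
  mem_dc : s ∈ dc k a b

section Gaps

variable {k a b c a' b' c' l j l' j' : ℕ} {s : Finset (ZMod k)}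

theorem triple_rotate (h : a + b + c = k) (i : ZMod k) :
    ({i, i + (a : ZMod k), i + a + b} : Finset (ZMod k)) =
      {i + (a : ZMod k), i + a + b, i + a + b + c} := by
  have sum_zero : (a : ZMod k) + b + c = 0 := by
    rw [← Nat.cast_add, ← Nat.cast_add, h, ZMod.natCast_self]
  have closes_up : i + (a : ZMod k) + b + c = i := by linear_combination sum_zero
  rw [closes_up]
  grind

theorem dc_subset_dc_of_add_eq (h : a + b + c = k) : dc k a b ⊆ dc k b c := by
  rintro _ ⟨i, rfl⟩
  exact ⟨i + a, triple_rotate h i⟩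

theorem dc_eq_dc_of_add_eq (h : a + b + c = k) : dc k a b = dc k b c :=
  (dc_subset_dc_of_add_eq h).antisymm <|
    (dc_subset_dc_of_add_eq (by omega : b + c + a = k)).trans
      (dc_subset_dc_of_add_eq (by omega : c + a + b = k))

theorem dihedralCycle_self : dihedralCycle k l l = Mlk k l := Set.union_self _

theorem dihedralCycle_eq_Sljk (h : l + j ≤ k) : dihedralCycle k l j = Sljk k l j := by
  rw [dihedralCycle, Sljk, dc_eq_dc_of_add_eq (a := j) (b := l) (c := k - l - j) (by omega)]

theorem HasGaps.rotate (h : HasGaps s a b c) : HasGaps s b c a where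
  pos_left := h.pos_mid
  pos_mid := h.pos_right
  pos_right := h.pos_left
  sum_eq := by have := h.sum_eq; omega
  mem_dc := dc_subset_dc_of_add_eq h.sum_eq h.mem_dc

theorem image_val_sub_triple (h : a + b < k) (i : ZMod k) :
    ({i, i + (a : ZMod k), i + a + b} : Finset (ZMod k)).image (fun x => (x - i).val) =
      {0, a, a + b} := by
  have val_add : ((a : ZMod k) + b).val = a + b := by
    rw [← Nat.cast_add, ZMod.val_cast_of_lt h]
  have val_a : (a : ZMod k).val = a := ZMod.val_cast_of_lt (by omega)
  simp [Finset.image_insert, add_assoc, val_a, val_add]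

theorem HasGaps.card_eq_three (h : HasGaps s a b c) : s.card = 3 := by
  obtain ⟨ha, hb, hc, hsum, i, rfl⟩ := h
  have hab : a + b < k := by omega
  refine le_antisymm Finset.card_le_three ?_
  calc 3 = ({0, a, a + b} : Finset ℕ).card :=
        (Finset.card_eq_three.2 ⟨0, a, a + b, by omega, by omega, by omega, rfl⟩).symm
    _ ≤ _ := image_val_sub_triple hab i ▸ Finset.card_image_le

theorem exists_hasGaps [NeZero k] (hs : s.card = 3) : ∃ a b c, HasGaps s a b c := by
  obtain ⟨x, y, z, hxy, hxz, hyz, rfl⟩ := Finset.card_eq_three.1 hs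
  wlog hlt : (y - x).val < (z - x).val generalizing y z
  · have val_ne : (y - x).val ≠ (z - x).val := fun h =>
      hyz (sub_left_injective (ZMod.val_injective k h))
    rw [Finset.pair_comm y z] at hs ⊢
    exact this z y hxz hxy hyz.symm hs (by omega)
  have hz : (z - x).val < k := ZMod.val_lt _
  have hy : 0 < (y - x).val := ZMod.val_pos.2 (sub_ne_zero.2 hxy.symm)
  refine ⟨(y - x).val, (z - x).val - (y - x).val, k - (z - x).val,
    hy, by omega, by omega, by omega, x, ?_⟩
  simp [Nat.cast_sub hlt.le]

theorem exists_hasGaps_le [NeZero k] (hs : s.card = 3) :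
    ∃ a b c, HasGaps s a b c ∧ a ≤ c ∧ b ≤ c := by
  obtain ⟨a, b, c, h⟩ := exists_hasGaps hs
  by_cases max_c : a ≤ c ∧ b ≤ c
  · exact ⟨a, b, c, h, max_c⟩
  by_cases max_a : b ≤ a ∧ c ≤ a
  · exact ⟨b, c, a, h.rotate, max_a⟩
  · exact ⟨c, a, b, h.rotate.rotate, by omega⟩

theorem eq_and_eq_of_triple_eq (hb : 0 < b) (hab : a + b < k) (ha' : 0 < a')
    (hb' : 0 < b') (hab' : a' + b' < k) {i : ZMod k}
    (h : ({i, i + (a : ZMod k), i + a + b} : Finset (ZMod k)) =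
      {i, i + (a' : ZMod k), i + a' + b'}) :
    a' = a ∧ b' = b := by
  have offsets_eq : ({0, a, a + b} : Finset ℕ) = {0, a', a' + b'} := by
    rw [← image_val_sub_triple hab i, h, image_val_sub_triple hab' i]
  simp only [Finset.ext_iff, Finset.mem_insert, Finset.mem_singleton] at offsets_eq
  have := offsets_eq a
  have := offsets_eq (a + b)
  have := offsets_eq a'
  have := offsets_eq (a' + b')
  omega

theorem HasGaps.eq_or_rotate (h : HasGaps s a b c) (h' : HasGaps s a' b' c') :
    a' = a ∧ b' = b ∨ a' = b ∧ b' = c ∨ a' = c ∧ b' = a := by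
  have same_base {p q r : ℕ} {i : ZMod k} (hp : HasGaps s p q r)
      (hi : s = {i, i + (p : ZMod k), i + p + q})
      (hi' : s = {i, i + (a' : ZMod k), i + a' + b'}) : a' = p ∧ b' = q := by
    have := hp.pos_right
    have := h'.pos_right
    exact eq_and_eq_of_triple_eq hp.pos_mid (by have := hp.sum_eq; omega) h'.pos_left h'.pos_mid
      (by have := h'.sum_eq; omega) (hi ▸ hi')
  obtain ⟨i, hi⟩ := h.mem_dc
  obtain ⟨i', hi'⟩ := h'.mem_dc
  have base_mem : i' ∈ ({i, i + (a : ZMod k), i + a + b} : Finset (ZMod k)) := by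
    rw [← hi, hi']
    exact Finset.mem_insert_self _ _
  have hi₁ := hi.trans (triple_rotate h.sum_eq i)
  have hi₂ := hi₁.trans (triple_rotate h.rotate.sum_eq _)
  simp only [Finset.mem_insert, Finset.mem_singleton] at base_mem
  rcases base_mem with rfl | rfl | rfl
  · exact .inl (same_base h hi hi')
  · exact .inr (.inl (same_base h.rotate hi₁ hi'))
  · exact .inr (.inr (same_base h.rotate.rotate hi₂ hi'))

theorem mem_dihedralCycle_iff_hasGaps (hl : 0 < l) (hj : 0 < j) (hlj : l + j < k) :
    s ∈ dihedralCycle k l j ↔ HasGaps s l j (k - l - j) ∨ HasGaps s j l (k - l - j) :=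
  ⟨Or.imp (⟨hl, hj, by omega, by omega, ·⟩) (⟨hj, hl, by omega, by omega, ·⟩),
    Or.imp HasGaps.mem_dc HasGaps.mem_dc⟩

theorem card_eq_three_of_mem_dihedralCycle (hl : 0 < l) (hj : 0 < j) (hlj : l + j < k)
    (hs : s ∈ dihedralCycle k l j) : s.card = 3 :=
  ((mem_dihedralCycle_iff_hasGaps hl hj hlj).1 hs).elim
    HasGaps.card_eq_three HasGaps.card_eq_three

theorem disjoint_dihedralCycle (hl : 0 < l) (hj : 0 < j) (hlj : l + j < k)
    (hl' : 0 < l') (hj' : 0 < j') (hlj' : l' + j' < k)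
    (hne : s(l', j') ∉ ({s(l, j), s(j, k - l - j), s(k - l - j, l)} : Set (Sym2 ℕ))) :
    Disjoint (dihedralCycle k l j) (dihedralCycle k l' j') := by
  simp only [Set.mem_insert_iff, Set.mem_singleton_iff, Sym2.eq_iff] at hne
  refine Set.disjoint_left.2 fun s hs hs' => ?_
  rw [mem_dihedralCycle_iff_hasGaps hl hj hlj] at hs
  rw [mem_dihedralCycle_iff_hasGaps hl' hj' hlj'] at hs'
  rcases hs with h | h <;> rcases hs' with h' | h' <;> have := h.eq_or_rotate h' <;> omega

end Gaps

section Decomposition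

variable {k l l' : ℕ} {p q : ℕ × ℕ} {s : Finset (ZMod k)}

theorem card_eq_three_of_mem_Mlk (hl : mRange k l) (hs : s ∈ Mlk k l) : s.card = 3 := by
  obtain ⟨hpos, hle⟩ := hl
  rw [← dihedralCycle_self] at hs
  exact card_eq_three_of_mem_dihedralCycle hpos hpos (by omega) hs

theorem card_eq_three_of_mem_Sljk (hp : tRange k p) (hs : s ∈ Sljk k p.1 p.2) : s.card = 3 := by
  obtain ⟨hpos, hlt, hsum⟩ := hp
  rw [← dihedralCycle_eq_Sljk (by omega)] at hs
  exact card_eq_three_of_mem_dihedralCycle hpos (by omega) (by omega) hs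

theorem exists_mem_Mlk_or_exists_mem_Sljk [NeZero k] (hs : s.card = 3) :
    (∃ l, mRange k l ∧ s ∈ Mlk k l) ∨ ∃ p : ℕ × ℕ, tRange k p ∧ s ∈ Sljk k p.1 p.2 := by
  obtain ⟨a, b, c, h, hac, hbc⟩ := exists_hasGaps_le hs
  have ha := h.pos_left
  have hb := h.pos_mid
  have hsum := h.sum_eq
  by_cases eq_ab : a = b
  · subst eq_ab
    exact .inl ⟨a, ⟨ha, by omega⟩, h.mem_dc⟩
  by_cases eq_bc : b = c
  · subst eq_bc
    exact .inl ⟨b, ⟨hb, by omega⟩, h.rotate.mem_dc⟩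
  by_cases eq_ac : a = c
  · subst eq_ac
    exact .inl ⟨a, ⟨ha, by omega⟩, h.rotate.rotate.mem_dc⟩
  right
  rcases lt_or_gt_of_ne eq_ab with hab | hba
  · refine ⟨(a, b), ⟨ha, hab, by grind⟩, ?_⟩
    rw [← dihedralCycle_eq_Sljk (by omega)]
    exact .inl h.mem_dc
  · refine ⟨(b, a), ⟨hb, hba, by grind⟩, ?_⟩
    rw [← dihedralCycle_eq_Sljk (by omega)]
    exact .inr h.mem_dc

theorem disjoint_Mlk (hl : mRange k l) (hl' : mRange k l') (hne : l ≠ l') :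
    Disjoint (Mlk k l) (Mlk k l') := by
  obtain ⟨hpos, hle⟩ := hl
  obtain ⟨hpos', hle'⟩ := hl'
  rw [← dihedralCycle_self, ← dihedralCycle_self]
  refine disjoint_dihedralCycle hpos hpos (by omega) hpos' hpos' (by omega) ?_
  simp only [Set.mem_insert_iff, Set.mem_singleton_iff, Sym2.eq_iff]
  omega

theorem disjoint_Sljk (hp : tRange k p) (hq : tRange k q) (hne : p ≠ q) :
    Disjoint (Sljk k p.1 p.2) (Sljk k q.1 q.2) := by
  obtain ⟨hpos, hlt, hsum⟩ := hp
  obtain ⟨hpos', hlt', hsum'⟩ := hq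
  rw [← dihedralCycle_eq_Sljk (by omega), ← dihedralCycle_eq_Sljk (by omega)]
  refine disjoint_dihedralCycle hpos (by omega) (by omega) hpos' (by omega) (by omega) ?_
  simp only [Set.mem_insert_iff, Set.mem_singleton_iff, Sym2.eq_iff]
  rw [Ne, Prod.ext_iff] at hne
  omega

theorem disjoint_Mlk_Sljk (hl : mRange k l) (hp : tRange k p) :
    Disjoint (Mlk k l) (Sljk k p.1 p.2) := by
  obtain ⟨hpos, hle⟩ := hl
  obtain ⟨hpos', hlt, hsum⟩ := hp
  rw [← dihedralCycle_self, ← dihedralCycle_eq_Sljk (by omega)]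
  refine disjoint_dihedralCycle hpos hpos (by omega) hpos' (by omega) (by omega) ?_
  simp only [Set.mem_insert_iff, Set.mem_singleton_iff, Sym2.eq_iff]
  omega

theorem setOf_card_eq_three [NeZero k] :
    {s : Finset (ZMod k) | s.card = 3} =
      (⋃ l ∈ {l : ℕ | mRange k l}, Mlk k l) ∪
      (⋃ p ∈ {p : ℕ × ℕ | tRange k p}, Sljk k p.1 p.2) := by
  ext s
  simp only [Set.mem_ofPred_eq, Set.mem_union, Set.mem_iUnion, exists_prop]
  refine ⟨exists_mem_Mlk_or_exists_mem_Sljk, ?_⟩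
  rintro (⟨l, hl, hs⟩ | ⟨p, hp, hs⟩)
  · exact card_eq_three_of_mem_Mlk hl hs
  · exact card_eq_three_of_mem_Sljk hp hs

end Decomposition

section Counting

theorem ncard_mRange (k : ℕ) : {l : ℕ | mRange k l}.ncard = (k - 1) / 2 := by
  have eq_Icc : {l : ℕ | mRange k l} = Finset.Icc 1 ((k - 1) / 2) := by
    ext l
    simp only [mRange, Set.mem_ofPred_eq, Finset.coe_Icc, Set.mem_Icc]
    omega
  rw [eq_Icc, Set.ncard_coe_finset, Nat.card_Icc, Nat.add_sub_cancel]

theorem setOf_tRange_eq_empty {k : ℕ} (hk : k ≤ 5) : {p : ℕ × ℕ | tRange k p} = ∅ := by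
  simp only [Set.eq_empty_iff_forall_notMem, Set.mem_ofPred_eq, tRange]
  omega

theorem finite_tRange (k : ℕ) : {p : ℕ × ℕ | tRange k p}.Finite := by
  refine ((Set.finite_Iio k).prod (Set.finite_Iio k)).subset ?_
  rintro p ⟨-, hlt, hsum⟩
  exact ⟨by grind, by grind⟩

theorem setOf_tRange_add_three (k : ℕ) :
    {p : ℕ × ℕ | tRange (k + 3) p} =
      (· + (1, 1)) '' {p : ℕ × ℕ | tRange k p} ∪ Prod.mk 1 '' Set.Icc 2 ((k + 1) / 2) := by
  ext ⟨l, j⟩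
  simp only [Set.mem_union, Set.mem_image, Set.mem_ofPred_eq, Set.mem_Icc, tRange, Prod.exists,
    Prod.mk_add_mk, Prod.mk.injEq]
  constructor
  · rintro ⟨hpos, hlt, hsum⟩
    rcases hpos.eq_or_lt with rfl | hl
    · exact .inr ⟨j, by omega, rfl, rfl⟩
    · exact .inl ⟨l - 1, j - 1, by omega, by omega, by omega⟩
  · rintro (⟨a, b, h, rfl, rfl⟩ | ⟨b, h, rfl, rfl⟩) <;> omega

theorem ncard_tRange_add_three (k : ℕ) :
    {p : ℕ × ℕ | tRange (k + 3) p}.ncard = {p : ℕ × ℕ | tRange k p}.ncard + (k - 1) / 2 := by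
  have disjoint_images : Disjoint ((· + (1, 1)) '' {p : ℕ × ℕ | tRange k p})
      (Prod.mk 1 '' Set.Icc 2 ((k + 1) / 2)) := by
    rw [Set.disjoint_left]
    rintro _ ⟨p, ⟨hpos, -⟩, rfl⟩ ⟨j, -, hj⟩
    have : 1 = p.1 + 1 := congrArg Prod.fst hj
    omega
  rw [setOf_tRange_add_three, Set.ncard_union_eq disjoint_images ((finite_tRange k).image _)
    ((Set.finite_Icc _ _).image _), Set.ncard_image_of_injective _ (add_left_injective _),
    Set.ncard_image_of_injective _ (Prod.mk_right_injective 1), ← Finset.coe_Icc,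
    Set.ncard_coe_finset, Nat.card_Icc]
  omega

theorem sq_mod_twelve (n : ℕ) : n ^ 2 % 12 = (n % 6) ^ 2 % 12 := by
  conv_lhs => rw [← Nat.div_add_mod n 6]
  ring_nf
  omega

/-- The right-hand side is the integer nearest to `(k - 3) ^ 2 / 12`, written so that the
subtraction does not truncate. -/
theorem ncard_tRange {k : ℕ} (hk : 0 < k) :
    {p : ℕ × ℕ | tRange k p}.ncard = (k ^ 2 + 15 - 6 * k) / 12 := by
  induction k using Nat.strong_induction_on with
  | _ k ih =>
    rcases le_or_gt k 3 with hk3 | hk3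
    · rw [setOf_tRange_eq_empty (by omega), Set.ncard_empty]
      interval_cases k <;> rfl
    · obtain ⟨n, rfl⟩ := Nat.exists_eq_add_of_le' hk3.le
      rw [ncard_tRange_add_three, ih n (by omega) (by omega)]
      have sq_mod := sq_mod_twelve n
      have expand : (n + 3) ^ 2 + 15 - 6 * (n + 3) = n ^ 2 + 6 := by
        rw [Nat.sub_eq_iff_eq_add (by nlinarith)]
        ring
      have no_truncation : 6 * n ≤ n ^ 2 + 15 := by nlinarith [sq_nonneg ((n : ℤ) - 3)]
      have : n % 6 < 6 := Nat.mod_lt _ (by norm_num)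
      rw [expand]
      interval_cases hr : n % 6 <;> omega

theorem sq_sub_div_twelve_of_mod_six {k : ℕ} (hmod : k % 6 = 1 ∨ k % 6 = 5) :
    (k ^ 2 + 15 - 6 * k) / 12 = (k ^ 2 - 6 * k + 5) / 12 := by
  have sq_mod : k ^ 2 % 12 = 1 := by
    rw [sq_mod_twelve]
    rcases hmod with h | h <;> norm_num [h]
  rcases lt_or_ge k 6 with hk | hk
  · obtain rfl | rfl : k = 1 ∨ k = 5 := by omega
    all_goals rfl
  · have : 6 * k ≤ k ^ 2 := by nlinarith
    omega

end Counting

section Components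

open AddSubgroup SimpleGraph

variable {A : Type*} [AddGroup A]

theorem addCayley_reachable_iff {T : Set A} {v w : A} :
    (addCayley T).Reachable v w ↔ -v + w ∈ AddSubgroup.closure T := by
  constructor
  · rintro ⟨p⟩
    induction p with
    | nil => simp
    | @cons u v w hadj _ ih =>
      have step : -u + v ∈ AddSubgroup.closure T := by
        rcases ((addCayley_adj _ _ _).1 hadj).2 with h | h
        · exact subset_closure h
        · simpa using neg_mem (subset_closure h)
      simpa [add_assoc] using add_mem step ih
  · intro h
    suffices ∀ x ∈ AddSubgroup.closure T, ∀ v, (addCayley T).Reachable v (v + x) by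
      simpa using this _ h v
    intro x hx
    induction hx using AddSubgroup.closure_induction with
    | mem x hx =>
      intro v
      by_cases hv : v = v + x
      · rw [← hv]
      · exact ((addCayley_adj _ _ _).2 ⟨hv, .inl (by simpa using hx)⟩).reachable
    | zero => simp
    | add x y _ _ hx hy => exact fun v => add_assoc v x y ▸ (hx v).trans (hy (v + x))
    | neg x _ hx => exact fun v => by simpa using (hx (v + -x)).symm

theorem card_connectedComponent_addCayley (T : Set A) :
    Nat.card (addCayley T).ConnectedComponent = (AddSubgroup.closure T).index :=
  Nat.card_congr <| Quot.congrRight fun v w => by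
    rw [QuotientAddGroup.leftRel_apply]
    exact addCayley_reachable_iff

theorem card_fiber_connectedComponentMk_addCayley (T : Set A)
    (c : (addCayley T).ConnectedComponent) :
    Nat.card {v // (addCayley T).connectedComponentMk v = c} =
      Nat.card (AddSubgroup.closure T) := by
  induction c using ConnectedComponent.ind with | _ u
  refine Nat.card_congr ((Equiv.addLeft (-u)).subtypeEquiv fun v => ?_)
  rw [ConnectedComponent.eq, reachable_comm]
  exact addCayley_reachable_iff

theorem closure_natCast_pair {R : Type*} [AddGroupWithOne R] (a b : ℕ) :
    AddSubgroup.closure {(a : R), (b : R)} = zmultiples ((a.gcd b : ℕ) : R) := by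
  have := congrArg (AddSubgroup.map (Int.castAddHom R)) (Int.closure_eq_zmultiples a b)
  simpa [AddMonoidHom.map_closure, Set.image_pair, AddMonoidHom.map_zmultiples] using this

variable {k : ℕ}

theorem cGraph_union (S T : Set (Finset (ZMod k))) :
    cGraph k (S ∪ T) = cGraph k S ⊔ cGraph k T := by
  ext v w
  simp only [cGraph, fromRel_adj, sup_adj, Set.mem_union]
  grind

/-- The differences, up to sign, between distinct vertices of a triangle in `(a : b : c)`. -/
def dcJumps (k a b : ℕ) : Set (ZMod k) := {(a : ZMod k), (b : ZMod k), (a : ZMod k) + b}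

theorem dcJumps_comm (a b : ℕ) : dcJumps k a b = dcJumps k b a := by
  rw [dcJumps, dcJumps, Set.insert_comm, add_comm]

theorem exists_mem_dc_of_jump {a b : ℕ} {v w : ZMod k} (h : -v + w ∈ dcJumps k a b) :
    ∃ s ∈ dc k a b, v ∈ s ∧ w ∈ s := by
  obtain h | h | h : -v + w = a ∨ -v + w = b ∨ -v + w = a + b := h
  · exact ⟨_, ⟨v, rfl⟩, by grind, by grind⟩
  · exact ⟨_, ⟨v - a, rfl⟩, by grind, by grind⟩
  · exact ⟨_, ⟨v, rfl⟩, by grind, by grind⟩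

theorem jump_of_mem_dc {a b : ℕ} {s : Finset (ZMod k)} {v w : ZMod k} (hs : s ∈ dc k a b)
    (hv : v ∈ s) (hw : w ∈ s) (hne : v ≠ w) :
    -v + w ∈ dcJumps k a b ∨ -w + v ∈ dcJumps k a b := by
  obtain ⟨i, rfl⟩ := hs
  simp only [dcJumps, Finset.mem_insert, Finset.mem_singleton, Set.mem_insert_iff,
    Set.mem_singleton_iff] at hv hw ⊢
  grind

theorem cGraph_dc (a b : ℕ) : cGraph k (dc k a b) = addCayley (dcJumps k a b) := by
  ext v w
  rw [cGraph, fromRel_adj, addCayley_adj]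
  refine and_congr_right fun hne => ⟨?_, Or.imp exists_mem_dc_of_jump exists_mem_dc_of_jump⟩
  rintro (⟨s, hs, hv, hw⟩ | ⟨s, hs, hw, hv⟩) <;> exact jump_of_mem_dc hs hv hw hne

theorem cGraph_dihedralCycle (a b : ℕ) :
    cGraph k (dihedralCycle k a b) = addCayley (dcJumps k a b) := by
  rw [dihedralCycle, cGraph_union, cGraph_dc, cGraph_dc, dcJumps_comm b a, sup_idem]

theorem closure_dcJumps (a b : ℕ) :
    AddSubgroup.closure (dcJumps k a b) = zmultiples ((a.gcd b : ℕ) : ZMod k) := by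
  rw [← closure_natCast_pair]
  refine le_antisymm ((AddSubgroup.closure_le _).2 ?_)
    (AddSubgroup.closure_mono (by grind [dcJumps]))
  have ha : (a : ZMod k) ∈ AddSubgroup.closure {(a : ZMod k), (b : ZMod k)} :=
    subset_closure (by simp)
  have hb : (b : ZMod k) ∈ AddSubgroup.closure {(a : ZMod k), (b : ZMod k)} :=
    subset_closure (by simp)
  rintro _ (rfl | rfl | rfl)
  exacts [ha, hb, add_mem ha hb]

theorem card_zmultiples_natCast [NeZero k] (g : ℕ) :
    Nat.card (zmultiples (g : ZMod k)) = k / k.gcd g := by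
  rw [Nat.card_zmultiples, ZMod.addOrderOf_coe _ (NeZero.ne k)]

theorem index_zmultiples_natCast [NeZero k] (g : ℕ) :
    (zmultiples (g : ZMod k)).index = k.gcd g := by
  have hk : 0 < k := NeZero.pos k
  have mul_eq := (zmultiples (g : ZMod k)).index_mul_card
  rw [card_zmultiples_natCast, Nat.card_zmod] at mul_eq
  have dvd := Nat.gcd_dvd_left k g
  refine Nat.eq_of_mul_eq_mul_right (Nat.div_pos (Nat.le_of_dvd hk dvd)
    (Nat.gcd_pos_of_pos_left g hk)) ?_
  rw [mul_eq, Nat.mul_div_cancel' dvd]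

theorem card_connectedComponent_dihedralCycle [NeZero k] (a b : ℕ) :
    Nat.card (cGraph k (dihedralCycle k a b)).ConnectedComponent = a.gcd (b.gcd k) := by
  rw [cGraph_dihedralCycle, card_connectedComponent_addCayley, closure_dcJumps,
    index_zmultiples_natCast, Nat.gcd_comm, Nat.gcd_assoc]

theorem card_fiber_connectedComponentMk_dihedralCycle [NeZero k] (a b : ℕ)
    (c : (cGraph k (dihedralCycle k a b)).ConnectedComponent) :
    Nat.card {v // (cGraph k (dihedralCycle k a b)).connectedComponentMk v = c} =
      k / a.gcd (b.gcd k) := by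
  revert c
  rw [cGraph_dihedralCycle]
  intro c
  rw [card_fiber_connectedComponentMk_addCayley, closure_dcJumps, card_zmultiples_natCast,
    Nat.gcd_comm, Nat.gcd_assoc]

end Components

theorem stmt_18_general (k : ℕ) (hk : 0 < k) :
    ({s : Finset (ZMod k) | s.card = 3} =
      (⋃ l ∈ {l : ℕ | mRange k l}, Mlk k l) ∪
      (⋃ p ∈ {p : ℕ × ℕ | tRange k p}, Sljk k p.1 p.2)) ∧
    (∀ l l' : ℕ, mRange k l → mRange k l' → l ≠ l' → Disjoint (Mlk k l) (Mlk k l')) ∧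
    (∀ p q : ℕ × ℕ, tRange k p → tRange k q → p ≠ q →
      Disjoint (Sljk k p.1 p.2) (Sljk k q.1 q.2)) ∧
    (∀ (l : ℕ) (p : ℕ × ℕ), mRange k l → tRange k p →
      Disjoint (Mlk k l) (Sljk k p.1 p.2)) ∧
    {l : ℕ | mRange k l}.ncard = (k - 1) / 2 ∧
    {p : ℕ × ℕ | tRange k p}.ncard = (k ^ 2 + 15 - 6 * k) / 12 ∧
    (∀ l : ℕ, mRange k l →
      Nat.card (cGraph k (Mlk k l)).ConnectedComponent = Nat.gcd l k ∧
      ∀ c : (cGraph k (Mlk k l)).ConnectedComponent,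
        Nat.card {v : ZMod k // (cGraph k (Mlk k l)).connectedComponentMk v = c} =
          k / Nat.gcd l k) ∧
    (∀ p : ℕ × ℕ, tRange k p →
      Nat.card (cGraph k (Sljk k p.1 p.2)).ConnectedComponent =
        Nat.gcd p.1 (Nat.gcd p.2 k) ∧
      ∀ c : (cGraph k (Sljk k p.1 p.2)).ConnectedComponent,
        Nat.card {v : ZMod k // (cGraph k (Sljk k p.1 p.2)).connectedComponentMk v = c} =
          k / Nat.gcd p.1 (Nat.gcd p.2 k)) := by
  have : NeZero k := ⟨hk.ne'⟩
  refine ⟨setOf_card_eq_three, fun _ _ => disjoint_Mlk, fun _ _ => disjoint_Sljk,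
    fun _ _ => disjoint_Mlk_Sljk, ncard_mRange k, ncard_tRange hk, fun l _ => ?_, fun p hp => ?_⟩
  · have gcd_self_gcd : l.gcd (l.gcd k) = l.gcd k := by rw [← Nat.gcd_assoc, Nat.gcd_self]
    rw [← dihedralCycle_self, ← gcd_self_gcd]
    exact ⟨card_connectedComponent_dihedralCycle l l,
      card_fiber_connectedComponentMk_dihedralCycle l l⟩
  · obtain ⟨-, hlt, hsum⟩ := hp
    rw [← dihedralCycle_eq_Sljk (by omega)]
    exact ⟨card_connectedComponent_dihedralCycle p.1 p.2,
      card_fiber_connectedComponentMk_dihedralCycle p.1 p.2⟩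

/-- For `k > 1` with `k ≡ 1, 5 (mod 6)`: the 2-skeleton of `Δ^{k−1}` (all 3-element
subsets of `ℤ/kℤ`) is the disjoint union of the `(k−1)/2` Möbius-strip complexes
`M_{l,k}` and the `(k²−6k+5)/12` torus complexes `S_{l,j,k}`; `M_{l,k}` has
`gcd(l,k)` connected components on `k/gcd(l,k)` vertices each, and `S_{l,j,k}` has
`gcd(l,j,k)` connected components on `k/gcd(l,j,k)` vertices each. -/
theorem stmt_18 (k : ℕ) (hk : 1 < k) (hmod : k % 6 = 1 ∨ k % 6 = 5) :
    ({s : Finset (ZMod k) | s.card = 3} =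
      (⋃ l ∈ {l : ℕ | mRange k l}, Mlk k l) ∪
      (⋃ p ∈ {p : ℕ × ℕ | tRange k p}, Sljk k p.1 p.2)) ∧
    (∀ l l' : ℕ, mRange k l → mRange k l' → l ≠ l' → Disjoint (Mlk k l) (Mlk k l')) ∧
    (∀ p q : ℕ × ℕ, tRange k p → tRange k q → p ≠ q →
      Disjoint (Sljk k p.1 p.2) (Sljk k q.1 q.2)) ∧
    (∀ (l : ℕ) (p : ℕ × ℕ), mRange k l → tRange k p →
      Disjoint (Mlk k l) (Sljk k p.1 p.2)) ∧
    {l : ℕ | mRange k l}.ncard = (k - 1) / 2 ∧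
    {p : ℕ × ℕ | tRange k p}.ncard = (k ^ 2 - 6 * k + 5) / 12 ∧
    (∀ l : ℕ, mRange k l →
      Nat.card (cGraph k (Mlk k l)).ConnectedComponent = Nat.gcd l k ∧
      ∀ c : (cGraph k (Mlk k l)).ConnectedComponent,
        Nat.card {v : ZMod k // (cGraph k (Mlk k l)).connectedComponentMk v = c} =
          k / Nat.gcd l k) ∧
    (∀ p : ℕ × ℕ, tRange k p →
      Nat.card (cGraph k (Sljk k p.1 p.2)).ConnectedComponent =
        Nat.gcd p.1 (Nat.gcd p.2 k) ∧
      ∀ c : (cGraph k (Sljk k p.1 p.2)).ConnectedComponent,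
        Nat.card {v : ZMod k // (cGraph k (Sljk k p.1 p.2)).connectedComponentMk v = c} =
          k / Nat.gcd p.1 (Nat.gcd p.2 k)) := by
  rw [← sq_sub_div_twelve_of_mod_six hmod]
  exact stmt_18_general k (by omega)
end

section
/- Let k > 1 with k ≡ 1 or 5 (mod 6) and let {a, b, c} be a 3-element subset of ℤ/kℤ represented by integers 0 ≤ a < b < c < k. If the three differences b−a, c−b and k−(c−a) are pairwise distinct, then {a, b, c} belongs to exactly one of the complexes S_{l,j,k} with 1 ≤ l < j < k − l − j, namely the one with l = min{b−a, c−b, k−(c−a)} and {l, j, k−l−j} = {b−a, c−b, k−(c−a)}; if at least two of the three differences are equal, then {a, b, c} belongs to M_{l,k} where l is the repeated difference and 1 ≤ l ≤ (k−1)/2. -/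
/-!
The cyclic gaps `x, y, z` of a triangle on `ℤ/kℤ` add up to `k`, and reading them off from another
vertex rotates them. Two triangles with a common base vertex coincide only if their gap sequences
agree, because all partial sums lie below `k`; hence the gap sequence of a triangle is unique up to
rotation. The complex `S_{l,j,k}` contains both cyclic orders of `l, j, k - l - j`, so it records
the unordered set of gaps, and `l < j < k - l - j` picks out its sorted enumeration.
-/

variable {k : ℕ}

/-- The triangle on `ℤ/kℤ` with base vertex `i` whose cyclic gaps, read from `i`, are `x`, `y` and
`k - x - y`; the difference cycle `(x : y : k - x - y)` consists of these triangles. -/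
def cyclicTriangle (i : ZMod k) (x y : ℕ) : Finset (ZMod k) := {i, i + x, i + x + y}

namespace cyclicTriangle

theorem eq_rotate {x y z : ℕ} (hsum : x + y + z = k) (i : ZMod k) :
    cyclicTriangle i x y = cyclicTriangle (i + (x : ZMod k)) y z := by
  have hz : i + x + y + z = i := by
    have hcast : (x + y + z : ZMod k) = k := mod_cast congrArg Nat.cast hsum
    linear_combination hcast + ZMod.natCast_self k
  rw [cyclicTriangle, cyclicTriangle, hz, Finset.insert_comm, Finset.pair_comm i]

theorem eq_image_natCast (i : ZMod k) (x y : ℕ) :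
    cyclicTriangle i x y = ({0, x, x + y} : Finset ℕ).image fun n : ℕ ↦ i + (n : ZMod k) := by
  simp [cyclicTriangle, Finset.image_insert, add_assoc]

theorem gaps_eq_of_eq {i : ZMod k} {x y x' y' : ℕ} (hx : 0 < x) (hy : 0 < y) (hxy : x + y < k)
    (hxy' : x' + y' < k) (h : cyclicTriangle i x y = cyclicTriangle i x' y') : x = x' ∧ y = y' := by
  have hinj : Set.InjOn (fun n : ℕ ↦ i + (n : ZMod k)) (Finset.range k : Set ℕ) := by
    rw [Finset.coe_range]
    exact (add_right_injective i).comp_injOn (CharP.natCast_injOn_Iio (ZMod k) k)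
  have hpartial : ({0, x, x + y} : Finset ℕ) = {0, x', x' + y'} := by
    rw [eq_image_natCast, eq_image_natCast] at h
    refine (Finset.image_eq_image_iff_of_injOn hinj ?_ ?_).mp h <;>
      · simp only [Finset.insert_subset_iff, Finset.singleton_subset_iff, Finset.mem_range]
        omega
  have hx_mem : x ∈ ({0, x', x' + y'} : Finset ℕ) := by simp [← hpartial]
  have hxy_mem : x + y ∈ ({0, x', x' + y'} : Finset ℕ) := by simp [← hpartial]
  simp only [Finset.mem_insert, Finset.mem_singleton] at hx_mem hxy_mem
  omega

end cyclicTriangle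

theorem dc_rotate {x y z : ℕ} (hsum : x + y + z = k) : dc k x y = dc k y z := by
  ext T
  refine (Equiv.addRight (x : ZMod k)).exists_congr fun i ↦ ?_
  exact Eq.congr_right (cyclicTriangle.eq_rotate hsum i)

section Triples

variable {l j m x y z : ℕ}

theorem triple_eq_iff_rotation_or_reflection (hsum : l + j + m = x + y + z) :
    ({l, j, m} : Finset ℕ) = {x, y, z} ↔
      ((x = l ∧ y = j) ∨ (y = l ∧ z = j) ∨ (z = l ∧ x = j)) ∨
      ((x = l ∧ y = m) ∨ (y = l ∧ z = m) ∨ (z = l ∧ x = m)) := by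
  constructor
  · -- With equal sums, equality of the underlying sets forces equality of the multiplicities.
    intro hset
    simp only [Finset.Subset.antisymm_iff, Finset.insert_subset_iff, Finset.singleton_subset_iff,
      Finset.mem_insert, Finset.mem_singleton] at hset
    obtain ⟨⟨hl, hj, hm⟩, hxyz⟩ := hset
    rcases hl with rfl | rfl | rfl <;> rcases hj with rfl | rfl | rfl <;> omega
  · intro hperm
    ext t
    simp only [Finset.mem_insert, Finset.mem_singleton]
    omega

theorem triple_eq_iff_min_max (hlj : l < j) (hjm : j < m) (hsum : l + j + m = x + y + z) :
    ({l, j, m} : Finset ℕ) = {x, y, z} ↔ l = min x (min y z) ∧ m = max x (max y z) := by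
  rw [triple_eq_iff_rotation_or_reflection hsum]
  omega

end Triples

section Gaps

variable {T : Finset (ZMod k)} {x y z : ℕ}

theorem mem_dc_iff_rotation (hx : 0 < x) (hy : 0 < y) (hz : 0 < z) (hsum : x + y + z = k)
    (hT : T ∈ dc k x y) {x' y' : ℕ} (hxy' : x' + y' < k) :
    T ∈ dc k x' y' ↔ (x = x' ∧ y = y') ∨ (y = x' ∧ z = y') ∨ (z = x' ∧ x = y') := by
  have hsum_yzx : y + z + x = k := by omega
  constructor
  · rintro ⟨i', hi'⟩
    obtain ⟨i, hi⟩ := hT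
    have hbase : i' ∈ cyclicTriangle i x y := by
      rw [cyclicTriangle, ← hi, hi']
      exact Finset.mem_insert_self _ _
    have htri : cyclicTriangle i x y = cyclicTriangle i' x' y' := hi.symm.trans hi'
    simp only [cyclicTriangle, Finset.mem_insert, Finset.mem_singleton] at hbase
    rcases hbase with rfl | rfl | rfl
    · exact .inl (cyclicTriangle.gaps_eq_of_eq hx hy (by omega) hxy' htri)
    · rw [cyclicTriangle.eq_rotate hsum] at htri
      exact .inr (.inl (cyclicTriangle.gaps_eq_of_eq hy hz (by omega) hxy' htri))
    · rw [cyclicTriangle.eq_rotate hsum, cyclicTriangle.eq_rotate hsum_yzx] at htri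
      exact .inr (.inr (cyclicTriangle.gaps_eq_of_eq hz hx (by omega) hxy' htri))
  · rintro (⟨rfl, rfl⟩ | ⟨rfl, rfl⟩ | ⟨rfl, rfl⟩)
    · exact hT
    · rwa [← dc_rotate hsum]
    · rwa [← dc_rotate hsum_yzx, ← dc_rotate hsum]

theorem mem_Mlk_iff (hx : 0 < x) (hy : 0 < y) (hz : 0 < z) (hsum : x + y + z = k)
    (hT : T ∈ dc k x y) {l : ℕ} (hlk : 2 * l < k) :
    T ∈ Mlk k l ↔ (x = l ∧ y = l) ∨ (y = l ∧ z = l) ∨ (z = l ∧ x = l) :=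
  mem_dc_iff_rotation hx hy hz hsum hT (by omega)

theorem mem_Sljk_iff_gaps_eq (hx : 0 < x) (hy : 0 < y) (hz : 0 < z) (hsum : x + y + z = k)
    (hT : T ∈ dc k x y) {l j : ℕ} (hj : 0 < j) (hlj : l + j < k) :
    T ∈ Sljk k l j ↔ ({l, j, k - l - j} : Finset ℕ) = {x, y, z} := by
  rw [Sljk, Set.mem_union, mem_dc_iff_rotation hx hy hz hsum hT hlj,
    mem_dc_iff_rotation hx hy hz hsum hT (by omega),
    triple_eq_iff_rotation_or_reflection (by omega)]

theorem mem_Sljk_iff_eq_min_max (hx : 0 < x) (hy : 0 < y) (hz : 0 < z) (hsum : x + y + z = k)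
    (hT : T ∈ dc k x y) {l j : ℕ} (hlj : l < j) (hjk : l + 2 * j < k) :
    T ∈ Sljk k l j ↔ l = min x (min y z) ∧ k - l - j = max x (max y z) := by
  rw [mem_Sljk_iff_gaps_eq hx hy hz hsum hT (by omega) (by omega)]
  exact triple_eq_iff_min_max hlj (by omega) (by omega)

theorem existsUnique_mem_Sljk (hx : 0 < x) (hy : 0 < y) (hz : 0 < z) (hsum : x + y + z = k)
    (hT : T ∈ dc k x y) (hxy : x ≠ y) (hxz : x ≠ z) (hyz : y ≠ z) :
    ∃! p : ℕ × ℕ, (1 ≤ p.1 ∧ p.1 < p.2 ∧ p.1 + 2 * p.2 < k) ∧ T ∈ Sljk k p.1 p.2 := by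
  obtain ⟨l, j, hl, hlj, hjk, hmin, hmax⟩ : ∃ l j, 0 < l ∧ l < j ∧ l + 2 * j < k ∧
      l = min x (min y z) ∧ k - l - j = max x (max y z) :=
    ⟨min x (min y z), k - min x (min y z) - max x (max y z), by omega⟩
  refine ⟨(l, j), ⟨⟨hl, hlj, hjk⟩, ?_⟩, ?_⟩
  · exact (mem_Sljk_iff_eq_min_max hx hy hz hsum hT hlj hjk).mpr ⟨hmin, hmax⟩
  · rintro ⟨l', j'⟩ ⟨⟨hl', hlj', hjk'⟩, hT'⟩
    rw [mem_Sljk_iff_eq_min_max hx hy hz hsum hT hlj' hjk'] at hT'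
    simp only at hjk'
    ext <;> omega

end Gaps

theorem natCast_triple_mem_dc {a b c : ℕ} (hab : a < b) (hbc : b < c) :
    ({(a : ZMod k), (b : ZMod k), (c : ZMod k)} : Finset (ZMod k)) ∈ dc k (b - a) (c - b) :=
  ⟨a, by simp [Nat.cast_sub hab.le, Nat.cast_sub hbc.le]⟩

theorem stmt_19_general (k a b c : ℕ) (hab : a < b) (hbc : b < c) (hck : c < k) :
    let T : Finset (ZMod k) := {(a : ZMod k), (b : ZMod k), (c : ZMod k)}
    let d1 := b - a
    let d2 := c - b
    let d3 := k - (c - a)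
    ((d1 ≠ d2 ∧ d1 ≠ d3 ∧ d2 ≠ d3) →
      (∃! p : ℕ × ℕ, (1 ≤ p.1 ∧ p.1 < p.2 ∧ p.1 + 2 * p.2 < k) ∧ T ∈ Sljk k p.1 p.2) ∧
      (∀ p : ℕ × ℕ, (1 ≤ p.1 ∧ p.1 < p.2 ∧ p.1 + 2 * p.2 < k) → T ∈ Sljk k p.1 p.2 →
        p.1 = min d1 (min d2 d3) ∧
        ({p.1, p.2, k - p.1 - p.2} : Finset ℕ) = ({d1, d2, d3} : Finset ℕ))) ∧
    ((d1 = d2 ∨ d1 = d3 ∨ d2 = d3) →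
      ∃ l : ℕ, 1 ≤ l ∧ 2 * l ≤ k - 1 ∧ T ∈ Mlk k l ∧
        ((d1 = d2 ∧ l = d1) ∨ (d1 = d3 ∧ l = d1) ∨ (d2 = d3 ∧ l = d2))) := by
  intro T d1 d2 d3
  have hT : T ∈ dc k d1 d2 := natCast_triple_mem_dc hab hbc
  have hd1 : 0 < d1 := by omega
  have hd2 : 0 < d2 := by omega
  have hd3 : 0 < d3 := by omega
  have hsum : d1 + d2 + d3 = k := by omega
  clear_value T d1 d2 d3
  refine ⟨fun ⟨h12, h13, h23⟩ ↦ ⟨existsUnique_mem_Sljk hd1 hd2 hd3 hsum hT h12 h13 h23, ?_⟩, ?_⟩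
  · rintro ⟨l, j⟩ ⟨-, hlj, hjk⟩ hS
    exact ⟨((mem_Sljk_iff_eq_min_max hd1 hd2 hd3 hsum hT hlj hjk).mp hS).1,
      (mem_Sljk_iff_gaps_eq hd1 hd2 hd3 hsum hT (by omega) (by omega)).mp hS⟩
  · have hM {l : ℕ} (hlk : 2 * l < k) := mem_Mlk_iff hd1 hd2 hd3 hsum hT hlk
    rintro (h12 | h13 | h23)
    · exact ⟨d1, hd1, by omega, (hM (by omega)).mpr (.inl ⟨rfl, h12.symm⟩), .inl ⟨h12, rfl⟩⟩
    · exact ⟨d1, hd1, by omega, (hM (by omega)).mpr (.inr (.inr ⟨h13.symm, rfl⟩)),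
        .inr (.inl ⟨h13, rfl⟩)⟩
    · exact ⟨d2, hd2, by omega, (hM (by omega)).mpr (.inr (.inl ⟨rfl, h23.symm⟩)),
        .inr (.inr ⟨h23, rfl⟩)⟩

/-- For `k > 1` with `k ≡ 1, 5 (mod 6)` and a 3-element subset `{a, b, c}` of `ℤ/kℤ`
with `0 ≤ a < b < c < k`: if the differences `b−a`, `c−b`, `k−(c−a)` are pairwise
distinct then `{a, b, c}` lies in exactly one complex `S_{l,j,k}` with
`1 ≤ l < j < k−l−j`, namely the one with `l = min{b−a, c−b, k−(c−a)}` and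
`{l, j, k−l−j} = {b−a, c−b, k−(c−a)}`; if at least two of the differences coincide,
then `{a, b, c} ∈ M_{l,k}` where `l` is the repeated difference, `1 ≤ l ≤ (k−1)/2`. -/
theorem stmt_19 (k a b c : ℕ) (hk : 1 < k) (hmod : k % 6 = 1 ∨ k % 6 = 5)
    (hab : a < b) (hbc : b < c) (hck : c < k) :
    let T : Finset (ZMod k) := {(a : ZMod k), (b : ZMod k), (c : ZMod k)}
    let d1 := b - a
    let d2 := c - b
    let d3 := k - (c - a)
    ((d1 ≠ d2 ∧ d1 ≠ d3 ∧ d2 ≠ d3) →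
      (∃! p : ℕ × ℕ, (1 ≤ p.1 ∧ p.1 < p.2 ∧ p.1 + 2 * p.2 < k) ∧ T ∈ Sljk k p.1 p.2) ∧
      (∀ p : ℕ × ℕ, (1 ≤ p.1 ∧ p.1 < p.2 ∧ p.1 + 2 * p.2 < k) → T ∈ Sljk k p.1 p.2 →
        p.1 = min d1 (min d2 d3) ∧
        ({p.1, p.2, k - p.1 - p.2} : Finset ℕ) = ({d1, d2, d3} : Finset ℕ))) ∧
    ((d1 = d2 ∨ d1 = d3 ∨ d2 = d3) →
      ∃ l : ℕ, 1 ≤ l ∧ 2 * l ≤ k - 1 ∧ T ∈ Mlk k l ∧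
        ((d1 = d2 ∧ l = d1) ∨ (d1 = d3 ∧ l = d1) ∨ (d2 = d3 ∧ l = d2))) :=
  stmt_19_general k a b c hab hbc hck
end
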